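/- arXiv:1903.05926 — 2 statements merged into one kernel-verified Lean document; each statement's English description precedes it below -/
import Mathlib

section
/- Given a finite Markov decision process, for every value function V : S → ℝ and every β > 0, the sup-norm distance between the DBS Bellman update and the max Bellman update satisfies ‖T_β V − T_m V‖∞ ≤ log(|A|)/β, where |A| is the number of actions. -/
/-!
Let `Z = ∑ i, exp (β * x i)`. The Gibbs weights `exp (β * x i) / Z` have entropy
`log Z - β * boltz β x`, which is at most the entropy `log n` of the uniform distribution on the `n`
actions. Since `Z` dominates each of its terms, `β * fmax x ≤ log Z`, so that
`β * (fmax x - boltz β x) ≤ log n`.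
-/

noncomputable def boltz {ι : Type*} [Fintype ι] (β : ℝ) (x : ι → ℝ) : ℝ :=
  (∑ i, Real.exp (β * x i) * x i) / ∑ i, Real.exp (β * x i)

noncomputable def fmax {ι : Type*} [Fintype ι] [Nonempty ι] (x : ι → ℝ) : ℝ :=
  Finset.univ.sup' Finset.univ_nonempty x

noncomputable def fmin {ι : Type*} [Fintype ι] [Nonempty ι] (x : ι → ℝ) : ℝ :=
  Finset.univ.inf' Finset.univ_nonempty x

noncomputable def Qval {S A : Type*} [Fintype S] (p : S → A → S → ℝ) (r : S → A → ℝ)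
    (γ : ℝ) (V : S → ℝ) (s : S) (a : A) : ℝ :=
  r s a + γ * ∑ s', p s a s' * V s'

noncomputable def Tm {S A : Type*} [Fintype S] [Fintype A] [Nonempty A]
    (p : S → A → S → ℝ) (r : S → A → ℝ) (γ : ℝ) (V : S → ℝ) (s : S) : ℝ :=
  fmax (Qval p r γ V s)

noncomputable def Tb {S A : Type*} [Fintype S] [Fintype A]
    (p : S → A → S → ℝ) (r : S → A → ℝ) (γ : ℝ) (β : ℝ) (V : S → ℝ) (s : S) : ℝ :=
  boltz β (Qval p r γ V s)

noncomputable def supNorm {S : Type*} [Fintype S] [Nonempty S] (V : S → ℝ) : ℝ :=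
  fmax (fun s => |V s|)

/-- The homogeneous form of `entropy ≤ log #s`, in which the weights need not sum to `1`. -/
lemma sum_negMulLog_le {ι : Type*} (s : Finset ι) {w : ι → ℝ} (hw : ∀ i ∈ s, 0 ≤ w i) :
    ∑ i ∈ s, Real.negMulLog (w i) ≤
      Real.negMulLog (∑ i ∈ s, w i) + (∑ i ∈ s, w i) * Real.log s.card := by
  obtain rfl | hs := s.eq_empty_or_nonempty
  · simp
  have hn : (0 : ℝ) < s.card := by exact_mod_cast hs.card_pos
  have jensen : (s.card : ℝ)⁻¹ * ∑ i ∈ s, Real.negMulLog (w i) ≤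
      Real.negMulLog ((s.card : ℝ)⁻¹ * ∑ i ∈ s, w i) := by
    simpa only [smul_eq_mul, Finset.mul_sum] using
      Real.concaveOn_negMulLog.le_map_sum (t := s) (w := fun _ ↦ (s.card : ℝ)⁻¹)
        (fun _ _ ↦ inv_nonneg.2 hn.le)
        (by rw [Finset.sum_const, nsmul_eq_mul, mul_inv_cancel₀ hn.ne']) hw
  calc ∑ i ∈ s, Real.negMulLog (w i)
      ≤ s.card * Real.negMulLog ((s.card : ℝ)⁻¹ * ∑ i ∈ s, w i) := (inv_mul_le_iff₀ hn).1 jensen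
    _ = Real.negMulLog (∑ i ∈ s, w i) + (∑ i ∈ s, w i) * Real.log s.card := by
      rw [Real.negMulLog_mul, Real.negMulLog, Real.log_inv]
      field_simp
      ring

lemma le_log_sum_exp {ι : Type*} {s : Finset ι} {i : ι} (hi : i ∈ s) (y : ι → ℝ) :
    y i ≤ Real.log (∑ j ∈ s, Real.exp (y j)) := by
  rw [Real.le_log_iff_exp_le (Finset.sum_pos (fun _ _ ↦ Real.exp_pos _) ⟨i, hi⟩)]
  exact Finset.single_le_sum (f := fun j ↦ Real.exp (y j)) (fun _ _ ↦ (Real.exp_pos _).le) hi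

section Boltzmann

variable {ι : Type*} [Fintype ι] [Nonempty ι]

lemma sum_exp_pos (y : ι → ℝ) : 0 < ∑ i, Real.exp (y i) :=
  Finset.sum_pos (fun _ _ ↦ Real.exp_pos _) Finset.univ_nonempty

lemma boltz_le_fmax (β : ℝ) (x : ι → ℝ) : boltz β x ≤ fmax x := by
  have boltz_eq_centerMass :
      boltz β x = Finset.univ.centerMass (fun i ↦ Real.exp (β * x i)) x :=
    div_eq_inv_mul _ _
  rw [boltz_eq_centerMass]
  exact Finset.centerMass_le_sup (fun _ _ ↦ (Real.exp_pos _).le) (sum_exp_pos _)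

lemma log_sum_exp_le_mul_boltz_add_log_card (β : ℝ) (x : ι → ℝ) :
    Real.log (∑ i, Real.exp (β * x i)) ≤ β * boltz β x + Real.log (Fintype.card ι) := by
  have hZ := sum_exp_pos fun i ↦ β * x i
  have entropy_le := sum_negMulLog_le Finset.univ fun i _ ↦ (Real.exp_pos (β * x i)).le
  have entropy_eq : ∑ i, Real.negMulLog (Real.exp (β * x i)) =
      -((∑ i, Real.exp (β * x i)) * (β * boltz β x)) := by
    rw [boltz, mul_left_comm, mul_div_cancel₀ _ hZ.ne', Finset.mul_sum, ← Finset.sum_neg_distrib]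
    refine Finset.sum_congr rfl fun i _ ↦ ?_
    rw [Real.negMulLog, Real.log_exp]
    ring
  rw [entropy_eq, Real.negMulLog, Finset.card_univ] at entropy_le
  refine le_of_mul_le_mul_left ?_ hZ
  linarith

lemma mul_fmax_le_log_sum_exp (β : ℝ) (x : ι → ℝ) :
    β * fmax x ≤ Real.log (∑ i, Real.exp (β * x i)) := by
  obtain ⟨i, hi, hmax⟩ := Finset.exists_mem_eq_sup' Finset.univ_nonempty x
  rw [fmax, hmax]
  exact le_log_sum_exp hi fun j ↦ β * x j

lemma fmax_sub_boltz_le {β : ℝ} (hβ : 0 < β) (x : ι → ℝ) :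
    fmax x - boltz β x ≤ Real.log (Fintype.card ι) / β := by
  rw [le_div_iff₀' hβ, mul_sub, sub_le_iff_le_add']
  exact (mul_fmax_le_log_sum_exp β x).trans (log_sum_exp_le_mul_boltz_add_log_card β x)

lemma abs_boltz_sub_fmax_le {β : ℝ} (hβ : 0 < β) (x : ι → ℝ) :
    |boltz β x - fmax x| ≤ Real.log (Fintype.card ι) / β := by
  rw [abs_sub_comm, abs_of_nonneg (sub_nonneg.2 (boltz_le_fmax β x))]
  exact fmax_sub_boltz_le hβ x

end Boltzmann

theorem dbs_bellman_gap_general {S A : Type*} [Fintype S] [Fintype A] [Nonempty S] [Nonempty A]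
    (Q : S → A → ℝ) {β : ℝ} (hβ : 0 < β) :
    supNorm (fun s ↦ boltz β (Q s) - fmax (Q s)) ≤ Real.log (Fintype.card A) / β :=
  Finset.sup'_le Finset.univ_nonempty _ fun s _ ↦ abs_boltz_sub_fmax_le hβ (Q s)

theorem dbs_bellman_gap {S A : Type*} [Fintype S] [Fintype A] [Nonempty S] [Nonempty A]
    (p : S → A → S → ℝ) (hp0 : ∀ s a s', 0 ≤ p s a s') (hp1 : ∀ s a, ∑ s', p s a s' = 1)
    (r : S → A → ℝ) (γ : ℝ) (hγ0 : 0 ≤ γ) (hγ1 : γ < 1)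
    (V : S → ℝ) (β : ℝ) (hβ : 0 < β) :
    supNorm (fun s => Tb p r γ β V s - Tm p r γ V s) ≤ Real.log (Fintype.card A) / β :=
  dbs_bellman_gap_general (Qval p r γ V) hβ
end

section
/- (Error bound of value iteration with the Boltzmann softmax operator, second part) Given a finite Markov decision process, let R = max_{s,a} |r(s,a)|, let V* satisfy T_m V* = V*, fix β > 0, let V₀ : S → ℝ be arbitrary, and define V_{t+1} = T_β V_t. Then limsup_{t→∞} ‖V_t − V*‖∞ ≤ 2R/(1−γ)². -/
open Filter

/-!
The Boltzmann average and the maximum of a finite family are both bounded in absolute value by the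
largest entry, so `T_β` and `T_m` both satisfy the growth estimate `‖T V‖ ≤ ‖r‖ + γ * ‖V‖`. Hence
`‖V_t‖ - ‖r‖ / (1 - γ)` is at most `γ ^ t` times its initial value, and `‖V*‖ ≤ ‖r‖ / (1 - γ)`.
The triangle inequality bounds the limit superior by `2 * ‖r‖ / (1 - γ)`, without any comparison of
`T_β` with `T_m`; this is at most `2 * ‖r‖ / (1 - γ) ^ 2`.
-/

section AffineGrowth

variable {γ c : ℝ}

theorem le_div_one_sub_of_le_add_mul {a : ℝ} (hγ1 : γ < 1) (ha : a ≤ c + γ * a) :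
    a ≤ c / (1 - γ) := by
  rw [le_div_iff₀ (sub_pos.2 hγ1)]
  linarith

theorem le_div_one_sub_add_pow_mul {a : ℕ → ℝ} (hγ0 : 0 ≤ γ) (hγ : γ ≠ 1)
    (ha : ∀ t, a (t + 1) ≤ c + γ * a t) (t : ℕ) :
    a t ≤ c / (1 - γ) + γ ^ t * (a 0 - c / (1 - γ)) := by
  have hfix : c / (1 - γ) = c + γ * (c / (1 - γ)) := by
    have : 1 - γ ≠ 0 := sub_ne_zero.2 hγ.symm
    field_simp
    ring
  have hgap : a t - c / (1 - γ) ≤ γ ^ t * (a 0 - c / (1 - γ)) :=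
    le_geom (u := fun k => a k - c / (1 - γ)) hγ0 t fun k _ => by linarith [ha k]
  linarith

theorem limsup_norm_sub_le_of_norm_le_add_mul {E : Type*} [SeminormedAddCommGroup E]
    {u : ℕ → E} {v : E} (hγ0 : 0 ≤ γ) (hγ1 : γ < 1)
    (hu : ∀ t, ‖u (t + 1)‖ ≤ c + γ * ‖u t‖) (hv : ‖v‖ ≤ c + γ * ‖v‖) :
    limsup (fun t => ‖u t - v‖) atTop ≤ 2 * c / (1 - γ) := by
  set L := c / (1 - γ)
  have hbound (t : ℕ) : ‖u t - v‖ ≤ 2 * L + γ ^ t * (‖u 0‖ - L) := by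
    linarith [norm_sub_le (u t) v, le_div_one_sub_add_pow_mul (a := (‖u ·‖)) hγ0 hγ1.ne hu t,
      le_div_one_sub_of_le_add_mul hγ1 hv]
  have hlim : Tendsto (fun t : ℕ => 2 * L + γ ^ t * (‖u 0‖ - L)) atTop (nhds (2 * L)) := by
    simpa using ((tendsto_pow_atTop_nhds_zero_of_lt_one hγ0 hγ1).mul_const
      (‖u 0‖ - L)).const_add (2 * L)
  calc limsup (fun t => ‖u t - v‖) atTop
      ≤ limsup (fun t : ℕ => 2 * L + γ ^ t * (‖u 0‖ - L)) atTop :=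
        -- On `ℝ` an unbounded `limsup` is a junk value, hence the two boundedness arguments.
        limsup_le_limsup (Eventually.of_forall hbound)
          (isCoboundedUnder_le_of_le atTop fun t => norm_nonneg (u t - v)) hlim.isBoundedUnder_le
    _ = 2 * L := hlim.limsup_eq
    _ = 2 * c / (1 - γ) := (mul_div_assoc _ _ _).symm

theorem div_one_sub_le_div_one_sub_sq (hc : 0 ≤ c) (hγ0 : 0 ≤ γ) (hγ1 : γ < 1) :
    c / (1 - γ) ≤ c / (1 - γ) ^ 2 :=
  have hpos : 0 < 1 - γ := sub_pos.2 hγ1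
  div_le_div_of_nonneg_left hc (pow_pos hpos 2)
    (pow_le_of_le_one hpos.le (sub_le_self 1 hγ0) two_ne_zero)

end AffineGrowth

section FiniteFamily

variable {ι : Type*} [Fintype ι]

theorem le_fmax [Nonempty ι] (x : ι → ℝ) (i : ι) : x i ≤ fmax x :=
  Finset.le_sup' x (Finset.mem_univ i)

theorem fmax_le [Nonempty ι] {x : ι → ℝ} {M : ℝ} (h : ∀ i, x i ≤ M) : fmax x ≤ M :=
  Finset.sup'_le _ _ fun i _ => h i

theorem abs_fmax_le_norm [Nonempty ι] (x : ι → ℝ) : |fmax x| ≤ ‖x‖ := by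
  obtain ⟨i, -, hi⟩ : ∃ i ∈ Finset.univ, fmax x = x i :=
    Finset.exists_mem_eq_sup' Finset.univ_nonempty x
  rw [hi]
  exact norm_le_pi_norm x i

theorem abs_boltz_le_norm (β : ℝ) (x : ι → ℝ) : |boltz β x| ≤ ‖x‖ := by
  have hZ : 0 ≤ ∑ i, Real.exp (β * x i) := Finset.sum_nonneg fun i _ => (Real.exp_pos _).le
  rw [boltz, abs_div, abs_of_nonneg hZ]
  refine div_le_of_le_mul₀ hZ (norm_nonneg x) ?_
  calc |∑ i, Real.exp (β * x i) * x i|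
      ≤ ∑ i, |Real.exp (β * x i) * x i| := Finset.abs_sum_le_sum_abs _ _
    _ = ∑ i, |x i| * Real.exp (β * x i) := by simp only [abs_mul, Real.abs_exp, mul_comm]
    _ ≤ ∑ i, ‖x‖ * Real.exp (β * x i) := by
        gcongr with i
        exact norm_le_pi_norm x i
    _ = ‖x‖ * ∑ i, Real.exp (β * x i) := (Finset.mul_sum _ _ _).symm

theorem supNorm_eq_norm [Nonempty ι] (x : ι → ℝ) : supNorm x = ‖x‖ :=
  le_antisymm (fmax_le (norm_le_pi_norm x))
    ((pi_norm_le_iff_of_nonempty x).2 (le_fmax fun i => |x i|))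

theorem fmax_abs_prod_eq_norm {κ : Type*} [Fintype κ] [Nonempty ι] [Nonempty κ] (x : ι → κ → ℝ) :
    fmax (fun ik : ι × κ => |x ik.1 ik.2|) = ‖x‖ :=
  le_antisymm
    (fmax_le fun ik => (norm_le_pi_norm (x ik.1) ik.2).trans (norm_le_pi_norm x ik.1))
    ((pi_norm_le_iff_of_nonempty x).2 fun i => (pi_norm_le_iff_of_nonempty (x i)).2 fun k =>
      le_fmax (fun ik : ι × κ => |x ik.1 ik.2|) (i, k))

theorem abs_sum_mul_le_norm {w : ι → ℝ} (hw0 : ∀ i, 0 ≤ w i) (hw1 : ∑ i, w i ≤ 1) (x : ι → ℝ) :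
    |∑ i, w i * x i| ≤ ‖x‖ :=
  calc |∑ i, w i * x i|
      ≤ ∑ i, |w i * x i| := Finset.abs_sum_le_sum_abs _ _
    _ = ∑ i, w i * |x i| := by simp only [abs_mul, abs_of_nonneg (hw0 _)]
    _ ≤ ∑ i, w i * ‖x‖ :=
        Finset.sum_le_sum fun i _ => mul_le_mul_of_nonneg_left (norm_le_pi_norm x i) (hw0 i)
    _ = (∑ i, w i) * ‖x‖ := (Finset.sum_mul _ _ _).symm
    _ ≤ ‖x‖ := mul_le_of_le_one_left (norm_nonneg x) hw1

end FiniteFamily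

section DecisionProcess

variable {S A : Type*} [Fintype S] [Fintype A] {p : S → A → S → ℝ} {γ : ℝ}

theorem norm_Qval_le (hp0 : ∀ s a s', 0 ≤ p s a s') (hp1 : ∀ s a, ∑ s', p s a s' ≤ 1)
    (hγ0 : 0 ≤ γ) (r : S → A → ℝ) (V : S → ℝ) : ‖Qval p r γ V‖ ≤ ‖r‖ + γ * ‖V‖ := by
  have hnonneg : 0 ≤ ‖r‖ + γ * ‖V‖ := by positivity
  refine (pi_norm_le_iff_of_nonneg hnonneg).2 fun s =>
    (pi_norm_le_iff_of_nonneg hnonneg).2 fun a => ?_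
  have hreward : |r s a| ≤ ‖r‖ := (norm_le_pi_norm (r s) a).trans (norm_le_pi_norm r s)
  calc |r s a + γ * ∑ s', p s a s' * V s'|
      ≤ |r s a| + |γ * ∑ s', p s a s' * V s'| := abs_add_le _ _
    _ = |r s a| + γ * |∑ s', p s a s' * V s'| := by rw [abs_mul, abs_of_nonneg hγ0]
    _ ≤ ‖r‖ + γ * ‖V‖ := by
        gcongr
        exact abs_sum_mul_le_norm (hp0 s a) (hp1 s a) V

theorem norm_Tm_le_norm_Qval [Nonempty A] (p : S → A → S → ℝ) (r : S → A → ℝ) (γ : ℝ)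
    (V : S → ℝ) : ‖Tm p r γ V‖ ≤ ‖Qval p r γ V‖ :=
  (pi_norm_le_iff_of_nonneg (norm_nonneg _)).2 fun s =>
    (abs_fmax_le_norm _).trans (norm_le_pi_norm (Qval p r γ V) s)

theorem norm_Tb_le_norm_Qval (p : S → A → S → ℝ) (r : S → A → ℝ) (γ β : ℝ) (V : S → ℝ) :
    ‖Tb p r γ β V‖ ≤ ‖Qval p r γ V‖ :=
  (pi_norm_le_iff_of_nonneg (norm_nonneg _)).2 fun s =>
    (abs_boltz_le_norm β _).trans (norm_le_pi_norm (Qval p r γ V) s)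

theorem fixed_boltz_vi_error_bound_reward_general [Nonempty A]
    (hp0 : ∀ s a s', 0 ≤ p s a s') (hp1 : ∀ s a, ∑ s', p s a s' ≤ 1)
    (r : S → A → ℝ) (hγ0 : 0 ≤ γ) (hγ1 : γ < 1)
    {Vstar : S → ℝ} (hVstar : Tm p r γ Vstar = Vstar)
    {β : ℕ → ℝ} {Vseq : ℕ → S → ℝ} (hVsucc : ∀ t, Vseq (t + 1) = Tb p r γ (β t) (Vseq t)) :
    limsup (fun t => ‖Vseq t - Vstar‖) atTop ≤ 2 * ‖r‖ / (1 - γ) := by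
  have hQ : ∀ V, ‖Qval p r γ V‖ ≤ ‖r‖ + γ * ‖V‖ := norm_Qval_le hp0 hp1 hγ0 r
  have hseq (t : ℕ) : ‖Vseq (t + 1)‖ ≤ ‖r‖ + γ * ‖Vseq t‖ := by
    rw [hVsucc]
    exact (norm_Tb_le_norm_Qval p r γ (β t) (Vseq t)).trans (hQ _)
  have hstar : ‖Vstar‖ ≤ ‖r‖ + γ * ‖Vstar‖ := by
    simpa only [hVstar] using (norm_Tm_le_norm_Qval p r γ Vstar).trans (hQ _)
  exact limsup_norm_sub_le_of_norm_le_add_mul hγ0 hγ1 hseq hstar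

end DecisionProcess

theorem fixed_boltz_vi_error_bound_reward {S A : Type*} [Fintype S] [Fintype A] [Nonempty S] [Nonempty A]
    (p : S → A → S → ℝ) (hp0 : ∀ s a s', 0 ≤ p s a s') (hp1 : ∀ s a, ∑ s', p s a s' = 1)
    (r : S → A → ℝ) (γ : ℝ) (hγ0 : 0 ≤ γ) (hγ1 : γ < 1)
    (R : ℝ) (hR : R = fmax (fun sa : S × A => |r sa.1 sa.2|))
    (Vstar : S → ℝ) (hVstar : Tm p r γ Vstar = Vstar)
    (β : ℝ) (hβ : 0 < β)
    (V₀ : S → ℝ) (Vseq : ℕ → S → ℝ)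
    (hV0 : Vseq 0 = V₀)
    (hVsucc : ∀ t, Vseq (t + 1) = Tb p r γ β (Vseq t)) :
    Filter.limsup (fun t => supNorm (fun s => Vseq t s - Vstar s)) atTop
      ≤ 2 * R / (1 - γ) ^ 2 := by
  simp only [hR, fmax_abs_prod_eq_norm, supNorm_eq_norm]
  exact (fixed_boltz_vi_error_bound_reward_general hp0 (fun s a => (hp1 s a).le) r hγ0 hγ1 hVstar
    hVsucc).trans (div_one_sub_le_div_one_sub_sq (by positivity) hγ0 hγ1)
end
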